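/- Let δ > 0, γ > 0, p ≥ 2, restrict the models to 𝓜_γ = {M ∈ 𝓜 : ‖Ψ_M‖_F² ≤ γ² n}, fix M₀ ∈ 𝓜_γ, and set U_M = 4 σ² (δ+1) ν_r^{-2} ‖Ψ_M‖_F² ln p. Let θ̂ be any measurable random element of the simplex Θ = {θ : θ_M ≥ 0 for all M ∈ 𝓜_γ, Σ_{M∈𝓜_γ} θ_M = 1}, and define f̂_{θ̂} = Σ_{M∈𝓜_γ} θ̂_M f̂_M and Δ₀ = 2σ⟨ξ, f̂_{θ̂} − f̂_{M₀}⟩ + (σ²/ν_r²) ‖Ψ_{M₀}ᵀ ε‖² − (3/2) U_{M₀} − Σ_{M∈𝓜_γ} θ̂_M U_M − (1/2) Σ_{M∈𝓜_γ} θ̂_M ‖f̂_M − f̂_{M₀}‖². Then E(Δ₀) ≤ U_{M₀} [ 3/(4(δ+1) ln p) − 3/2 ] + (4 σ² γ²/ν_r²) n p^{−δ}. -/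

import Mathlib

open MeasureTheory ProbabilityTheory Matrix Finset

noncomputable section

/-- Squared Euclidean norm of a vector in `ℝ^k`. -/
def sqnorm {k : ℕ} (v : Fin k → ℝ) : ℝ := ∑ i, v i ^ 2

/-- Euclidean inner product on `ℝ^k`. -/
def ip {k : ℕ} (u v : Fin k → ℝ) : ℝ := ∑ i, u i * v i

/-- The `j`-th column of a matrix. -/
def colv {a b : ℕ} (B : Matrix (Fin a) (Fin b) ℝ) (j : Fin b) : Fin a → ℝ := fun i => B i j

/-- The matrix `B_M`: the columns of `B` outside `M` are replaced by zero. -/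
def restr {a b : ℕ} (B : Matrix (Fin a) (Fin b) ℝ) (M : Finset (Fin b)) :
    Matrix (Fin a) (Fin b) ℝ := fun i j => if j ∈ M then B i j else 0

/-- Squared Frobenius norm of a matrix. -/
def frob2 {a b : ℕ} (B : Matrix (Fin a) (Fin b) ℝ) : ℝ := ∑ j, sqnorm (colv B j)

/-- `x` has at most `r` nonzero coordinates. -/
def sparse {k : ℕ} (r : ℕ) (x : Fin k → ℝ) : Prop := (Function.support x).ncard ≤ r

/-- `H` is the orthogonal projection matrix of `ℝ^m` onto `span{φ_j : j ∈ M}`: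
symmetric, idempotent, with range equal to the span of the columns of `Φ` indexed by `M`. -/
def IsProjOnto {m p : ℕ} (Φ : Matrix (Fin m) (Fin p) ℝ) (M : Finset (Fin p))
    (H : Matrix (Fin m) (Fin m) ℝ) : Prop :=
  H.IsSymm ∧ H * H = H ∧
    LinearMap.range H.mulVecLin = Submodule.span ℝ (colv Φ '' (M : Set (Fin p)))

/-- `Ψ = A (AᵀA)⁻¹ Φ`. -/
def Psi {n m p : ℕ} (A : Matrix (Fin n) (Fin m) ℝ) (Φ : Matrix (Fin m) (Fin p) ℝ) :
    Matrix (Fin n) (Fin p) ℝ := A * (Aᵀ * A)⁻¹ * Φ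

/-- `z = (AᵀA)⁻¹ Aᵀ y` where `y = A f + σ e`. -/
def zv {n m : ℕ} (A : Matrix (Fin n) (Fin m) ℝ) (f : Fin m → ℝ) (σ : ℝ) (e : Fin n → ℝ) :
    Fin m → ℝ := ((Aᵀ * A)⁻¹ * Aᵀ).mulVec (A.mulVec f + σ • e)

/-- `ξ = (AᵀA)⁻¹ Aᵀ e`. -/
def xiv {n m : ℕ} (A : Matrix (Fin n) (Fin m) ℝ) (e : Fin n → ℝ) : Fin m → ℝ :=
  ((Aᵀ * A)⁻¹ * Aᵀ).mulVec e

/-- The collection `𝓜` of models of size at most `r/2`. -/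
def models (p r : ℕ) : Finset (Finset (Fin p)) := Finset.univ.filter fun M => 2 * M.card ≤ r

open scoped Classical in
/-- The restricted collection `𝓜_γ = {M ∈ 𝓜 : ‖Ψ_M‖_F² ≤ γ²n}`. -/
def modelsG {n m p : ℕ} (r : ℕ) (A : Matrix (Fin n) (Fin m) ℝ) (Φ : Matrix (Fin m) (Fin p) ℝ)
    (γ : ℝ) : Finset (Finset (Fin p)) :=
  Finset.univ.filter fun M => 2 * M.card ≤ r ∧ frob2 (restr (Psi A Φ) M) ≤ γ ^ 2 * (n : ℝ)

/-- The aggregated estimator `f̂_θ = ∑_{M ∈ C} θ_M f̂_M`, where `f̂_M = H_M z`. -/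
def aggEst {m p : ℕ} (C : Finset (Finset (Fin p)))
    (H : Finset (Fin p) → Matrix (Fin m) (Fin m) ℝ) (zvec : Fin m → ℝ)
    (θ : Finset (Fin p) → ℝ) : Fin m → ℝ :=
  ∑ M ∈ C, θ M • (H M).mulVec zvec

/-- The penalty `U_M = 4σ²(δ+1)ν_r⁻² ‖Ψ_M‖_F² ln p`. -/
def Ufun {n m p : ℕ} (A : Matrix (Fin n) (Fin m) ℝ) (Φ : Matrix (Fin m) (Fin p) ℝ)
    (σ δ ν2 : ℝ) (M : Finset (Fin p)) : ℝ :=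
  4 * σ ^ 2 * (δ + 1) / ν2 * frob2 (restr (Psi A Φ) M) * Real.log p

/-- The Q-aggregation criterion (with `α = 1/2`, multiplied by 2):
`∑_M θ_M (‖z - f̂_M‖² + 2U_M) + ‖z - f̂_θ‖²`. -/
def aggCrit {m p : ℕ} (C : Finset (Finset (Fin p)))
    (H : Finset (Fin p) → Matrix (Fin m) (Fin m) ℝ) (zvec : Fin m → ℝ)
    (U : Finset (Fin p) → ℝ) (θ : Finset (Fin p) → ℝ) : ℝ :=
  ∑ M ∈ C, θ M * (sqnorm (zvec - (H M).mulVec zvec) + 2 * U M) +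
    sqnorm (zvec - aggEst C H zvec θ)

/-!
Write `X_j = ⟨φ_j, ξ⟩ = ⟨ψ_j, ε⟩`, a centred Gaussian of variance `v_j = ‖ψ_j‖²`. For each model `M`
the difference `f̂_M - f̂_{M₀} = Φx` has `x` supported in `M ∪ M₀`, so `‖Φx‖² ≥ ν_r² ‖x‖²` and
completing the square coordinatewise in `x` gives
`2σ⟨ξ, f̂_M - f̂_{M₀}⟩ - ½‖f̂_M - f̂_{M₀}‖² ≤ (2σ²/ν_r²) (∑_{j ∈ M} X_j² + ∑_{j ∈ M₀} X_j²)`.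
With `s = 2(δ+1) ln p`, the penalty is `U_M = (2σ²/ν_r²) s ∑_{j ∈ M} v_j`, so subtracting it leaves
at most the sum of the positive parts `(X_j² - s v_j)₊` over all `j` in some model. This bound does
not depend on `M`, hence survives averaging with the data-dependent weights `θ̂_M`. In expectation
the terms `X_j²` with `j ∈ M₀` give `(3σ²/ν_r²) ∑_{j ∈ M₀} v_j = U_{M₀} · 3/(4(δ+1) ln p)`. For the
positive parts, `E (X_j² - s v_j)₊ ≤ 2 v_j e^{-s/2} = 2 v_j p^{-(δ+1)}`, there are at most `p`
indices, and each has `v_j ≤ γ² n`.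
-/

open scoped NNReal ENNReal

lemma gaussianPDFReal_add_eq_exp_mul (μ : ℝ) (v : ℝ≥0) (x t : ℝ) :
    gaussianPDFReal μ v (x + t) =
      Real.exp (-t ^ 2 / (2 * v)) * (gaussianPDFReal μ v x * Real.exp (-(t * (x - μ) / v))) := by
  rcases eq_or_ne v 0 with rfl | hv
  · simp
  · have hv' : (v : ℝ) ≠ 0 := by exact_mod_cast hv
    have hexp : -(x + t - μ) ^ 2 / (2 * v) =
        -t ^ 2 / (2 * v) + (-(x - μ) ^ 2 / (2 * v) + -(t * (x - μ) / v)) := by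
      field_simp
      ring
    rw [gaussianPDFReal, gaussianPDFReal, hexp, Real.exp_add, Real.exp_add]
    ring

lemma add_sq_sub_sq_mul_exp_neg_le {t u : ℝ} (ht : 0 ≤ t) (hu : 0 ≤ u) :
    ((u + t) ^ 2 - t ^ 2) * Real.exp (-(t * u)) ≤ u ^ 2 + 1 := by
  have htu : 0 ≤ t * u := mul_nonneg ht hu
  have hquad : u ^ 2 * Real.exp (-(t * u)) ≤ u ^ 2 :=
    mul_le_of_le_one_right (sq_nonneg u) (Real.exp_le_one_iff.2 (neg_nonpos.2 htu))
  have hlin : t * u * Real.exp (-(t * u)) ≤ 1 / 2 :=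
    (Real.mul_exp_neg_le_exp_neg_one _).trans (by linarith [Real.exp_neg_one_lt_d9])
  linarith

lemma integral_sq_gaussianReal (v : ℝ≥0) : ∫ x, x ^ 2 ∂gaussianReal 0 v = v := by
  rw [← variance_fun_id_gaussianReal (μ := 0) (v := v),
    variance_of_integral_eq_zero (by fun_prop) integral_id_gaussianReal]

lemma integrable_sq_gaussianReal (v : ℝ≥0) : Integrable (fun x : ℝ => x ^ 2) (gaussianReal 0 v) :=
  (memLp_id_gaussianReal' 2 ENNReal.ofNat_ne_top).integrable_sq

lemma integral_comp_abs_gaussianReal {v : ℝ≥0} (hv : v ≠ 0) (f : ℝ → ℝ) :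
    ∫ x, f |x| ∂gaussianReal 0 v = 2 * ∫ x in Set.Ioi 0, gaussianPDFReal 0 v x * f x := by
  have heven : ∀ x, gaussianPDFReal 0 v |x| = gaussianPDFReal 0 v x := fun x => by
    simp [gaussianPDFReal]
  rw [integral_gaussianReal_eq_integral_smul hv, ← integral_comp_abs]
  simp only [heven, smul_eq_mul]

lemma integrable_gaussianPDFReal_mul {μ : ℝ} {v : ℝ≥0} (hv : v ≠ 0) {f : ℝ → ℝ}
    (hf : Integrable f (gaussianReal μ v)) : Integrable fun x => gaussianPDFReal μ v x * f x := by
  rw [gaussianReal_of_var_ne_zero μ hv,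
    integrable_withDensity_iff (measurable_gaussianPDF μ v)
      (.of_forall fun _ => gaussianPDF_lt_top)] at hf
  simpa only [toReal_gaussianPDF, mul_comm] using hf

lemma gaussianPDFReal_add_mul_sub_sq_le {t u : ℝ} (ht : 0 ≤ t) (hu : 0 ≤ u) :
    gaussianPDFReal 0 1 (u + t) * ((u + t) ^ 2 - t ^ 2) ≤
      Real.exp (-t ^ 2 / 2) * (gaussianPDFReal 0 1 u * (u ^ 2 + 1)) := by
  calc gaussianPDFReal 0 1 (u + t) * ((u + t) ^ 2 - t ^ 2)
      = Real.exp (-t ^ 2 / 2) * (gaussianPDFReal 0 1 u *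
          (((u + t) ^ 2 - t ^ 2) * Real.exp (-(t * u)))) := by
        rw [gaussianPDFReal_add_eq_exp_mul, NNReal.coe_one, sub_zero, mul_one, div_one]
        ring
    _ ≤ Real.exp (-t ^ 2 / 2) * (gaussianPDFReal 0 1 u * (u ^ 2 + 1)) := by
        gcongr
        · exact gaussianPDFReal_nonneg 0 1 u
        · exact add_sq_sub_sq_mul_exp_neg_le ht hu

lemma integral_Ioi_eq_integral_Ioi_zero_comp_add (f : ℝ → ℝ) (t : ℝ) :
    ∫ x in Set.Ioi t, f x = ∫ u in Set.Ioi 0, f (u + t) := by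
  rw [← (measurePreserving_add_right volume t).setIntegral_preimage_emb
    (measurableEmbedding_addRight t) f (Set.Ioi t), Set.preimage_add_const_Ioi, sub_self]

-- Shifting by `t = √s` makes the factor `e^{-s/2}` appear: the density at `u + t` is
-- `e^{-t²/2} e^{-tu}` times the density at `u`.
lemma integral_max_sq_sub_gaussianReal_zero_one_le {s : ℝ} (hs : 0 ≤ s) :
    ∫ x, max (x ^ 2 - s) 0 ∂gaussianReal 0 1 ≤ 2 * Real.exp (-s / 2) := by
  obtain ⟨t, ht, rfl⟩ : ∃ t : ℝ, 0 ≤ t ∧ t ^ 2 = s := ⟨√s, Real.sqrt_nonneg s, Real.sq_sqrt hs⟩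
  have hvanish : ∀ x ∈ Set.Ioi 0 \ Set.Ioi t,
      gaussianPDFReal 0 1 x * max (x ^ 2 - t ^ 2) 0 = 0 := by
    intro x hx
    have hle : x ^ 2 ≤ t ^ 2 := pow_le_pow_left₀ hx.1.le (not_lt.1 hx.2) 2
    rw [max_eq_right (sub_nonpos.2 hle), mul_zero]
  have hint : Integrable fun u : ℝ => gaussianPDFReal 0 1 u * (u ^ 2 + 1) :=
    integrable_gaussianPDFReal_mul one_ne_zero
      ((integrable_sq_gaussianReal 1).add (integrable_const 1))
  calc ∫ x, max (x ^ 2 - t ^ 2) 0 ∂gaussianReal 0 1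
      = 2 * ∫ x in Set.Ioi 0, gaussianPDFReal 0 1 x * max (x ^ 2 - t ^ 2) 0 := by
        rw [← integral_comp_abs_gaussianReal one_ne_zero fun x => max (x ^ 2 - t ^ 2) 0]
        simp only [sq_abs]
    _ = 2 * ∫ u in Set.Ioi 0, gaussianPDFReal 0 1 (u + t) * max ((u + t) ^ 2 - t ^ 2) 0 := by
        rw [setIntegral_eq_of_subset_of_forall_sdiff_eq_zero measurableSet_Ioi
          (Set.Ioi_subset_Ioi ht) hvanish, integral_Ioi_eq_integral_Ioi_zero_comp_add]
    _ ≤ 2 * ∫ u in Set.Ioi 0, Real.exp (-t ^ 2 / 2) * (gaussianPDFReal 0 1 u * (u ^ 2 + 1)) := by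
        gcongr 2 * ?_
        refine integral_mono_of_nonneg
          (.of_forall fun u => mul_nonneg (gaussianPDFReal_nonneg _ _ _) (le_max_right _ _))
          (hint.const_mul _).restrict ?_
        filter_upwards [ae_restrict_mem measurableSet_Ioi] with u hu
        rw [max_eq_left (by nlinarith [Set.mem_Ioi.1 hu])]
        exact gaussianPDFReal_add_mul_sub_sq_le ht hu.le
    _ = Real.exp (-t ^ 2 / 2) * ∫ u, (u ^ 2 + 1) ∂gaussianReal 0 1 := by
        rw [integral_const_mul, mul_left_comm,
          ← integral_comp_abs_gaussianReal one_ne_zero fun u => u ^ 2 + 1]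
        simp only [sq_abs]
    _ = 2 * Real.exp (-t ^ 2 / 2) := by
        rw [integral_add (integrable_sq_gaussianReal 1) (integrable_const 1),
          integral_sq_gaussianReal, integral_const, probReal_univ, NNReal.coe_one]
        norm_num [mul_comm]

lemma integral_max_sq_sub_gaussianReal_le (v : ℝ≥0) {s : ℝ} (hs : 0 ≤ s) :
    ∫ x, max (x ^ 2 - s * v) 0 ∂gaussianReal 0 v ≤ v * (2 * Real.exp (-s / 2)) := by
  have hlaw : HasLaw (fun x => √v * x) (gaussianReal 0 v) (gaussianReal 0 1) := by
    simpa [Real.sq_sqrt] using gaussianReal_const_mul (HasLaw.id (μ := gaussianReal 0 1)) √v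
  have hscale : ∀ x, max ((√v * x) ^ 2 - s * v) 0 = v * max (x ^ 2 - s) 0 := fun x => by
    rw [mul_max_of_nonneg _ _ v.coe_nonneg, mul_pow, Real.sq_sqrt v.coe_nonneg, mul_zero, mul_sub,
      mul_comm s]
  calc ∫ x, max (x ^ 2 - s * v) 0 ∂gaussianReal 0 v
      = ∫ x, max ((√v * x) ^ 2 - s * v) 0 ∂gaussianReal 0 1 :=
        (hlaw.integral_comp (f := fun x => max (x ^ 2 - s * v) 0) (by fun_prop)).symm
    _ = v * ∫ x, max (x ^ 2 - s) 0 ∂gaussianReal 0 1 := by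
        simp only [hscale, integral_const_mul]
    _ ≤ v * (2 * Real.exp (-s / 2)) := by
        gcongr
        exact integral_max_sq_sub_gaussianReal_zero_one_le hs

section Dictionary

variable {n m p : ℕ}

lemma sqnorm_nonneg {k : ℕ} (v : Fin k → ℝ) : 0 ≤ sqnorm v :=
  Finset.sum_nonneg fun _ _ => sq_nonneg _

lemma colv_restr (B : Matrix (Fin n) (Fin p) ℝ) (M : Finset (Fin p)) (j : Fin p) :
    colv (restr B M) j = if j ∈ M then colv B j else 0 := by
  ext i
  simp only [colv, restr]
  split_ifs <;> rfl

lemma frob2_restr (B : Matrix (Fin n) (Fin p) ℝ) (M : Finset (Fin p)) :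
    frob2 (restr B M) = ∑ j ∈ M, sqnorm (colv B j) := by
  have hcol : ∀ j, sqnorm (colv (restr B M) j) = if j ∈ M then sqnorm (colv B j) else 0 :=
    fun j => by
      rw [colv_restr]
      split_ifs <;> simp [sqnorm]
  simp [frob2, hcol]

lemma sqnorm_restr_transpose_mulVec (B : Matrix (Fin n) (Fin p) ℝ) (M : Finset (Fin p))
    (e : Fin n → ℝ) :
    sqnorm ((restr B M)ᵀ.mulVec e) = ∑ j ∈ M, ip (colv B j) e ^ 2 := by
  have hcoord : ∀ j, (restr B M)ᵀ.mulVec e j = if j ∈ M then ip (colv B j) e else 0 := fun j => by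
    change ip (colv (restr B M) j) e = _
    rw [colv_restr]
    split_ifs <;> simp [ip]
  simp [sqnorm, hcoord, ite_pow]

lemma ip_mulVec (Φ : Matrix (Fin m) (Fin p) ℝ) (ξ : Fin m → ℝ) (x : Fin p → ℝ) :
    ip ξ (Φ.mulVec x) = ∑ j, ip (colv Φ j) ξ * x j := by
  change ξ ⬝ᵥ Φ.mulVec x = Φᵀ.mulVec ξ ⬝ᵥ x
  rw [dotProduct_mulVec, mulVec_transpose]

lemma ip_colv_xiv (A : Matrix (Fin n) (Fin m) ℝ) (Φ : Matrix (Fin m) (Fin p) ℝ) (j : Fin p)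
    (e : Fin n → ℝ) : ip (colv Φ j) (xiv A e) = ip (colv (Psi A Φ) j) e := by
  change (Φᵀ.mulVec (xiv A e)) j = ((Psi A Φ)ᵀ.mulVec e) j
  rw [xiv, mulVec_mulVec]
  simp only [Psi, transpose_mul, transpose_nonsing_inv, transpose_transpose]

lemma exists_support_subset_mulVec_eq {Φ : Matrix (Fin m) (Fin p) ℝ} {T : Finset (Fin p)}
    {d : Fin m → ℝ} (hd : d ∈ Submodule.span ℝ (colv Φ '' (T : Set (Fin p)))) :
    ∃ x : Fin p → ℝ, Function.support x ⊆ T ∧ Φ.mulVec x = d := by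
  obtain ⟨c, rfl⟩ := (Submodule.mem_span_image_finset_iff_exists_fun' ℝ).1 hd
  refine ⟨(T : Set (Fin p)).indicator c, Set.support_indicator_subset, ?_⟩
  ext i
  simp [mulVec, dotProduct, colv, Set.indicator_apply, mul_comm]

/-- `κ` is a lower bound for `‖Φx‖² / ‖x‖²` over the nonzero `r`-sparse vectors `x`, i.e. `κ ≤ ν_r²`
in the notation of the theorem. -/
def IsSparseLowerBound (Φ : Matrix (Fin m) (Fin p) ℝ) (r : ℕ) (κ : ℝ) : Prop :=
  ∀ x : Fin p → ℝ, x ≠ 0 → sparse r x → κ * sqnorm x ≤ sqnorm (Φ.mulVec x)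

lemma IsSparseLowerBound.mul_sqnorm_le {Φ : Matrix (Fin m) (Fin p) ℝ} {r : ℕ} {κ : ℝ}
    (hΦ : IsSparseLowerBound Φ r κ) {T : Finset (Fin p)} (hT : #T ≤ r) {x : Fin p → ℝ}
    (hx : Function.support x ⊆ T) : κ * sqnorm x ≤ sqnorm (Φ.mulVec x) := by
  rcases eq_or_ne x 0 with rfl | hx0
  · simp [sqnorm]
  · refine hΦ x hx0 ?_
    calc (Function.support x).ncard ≤ (T : Set (Fin p)).ncard :=
          Set.ncard_le_ncard hx T.finite_toSet
      _ = #T := Set.ncard_coe_finset T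
      _ ≤ r := hT

lemma two_mul_mul_sub_half_mul_sq_le {κ : ℝ} (hκ : 0 < κ) (σ a x : ℝ) :
    2 * σ * (a * x) - κ / 2 * x ^ 2 ≤ 2 * σ ^ 2 / κ * a ^ 2 := by
  have hsquare : 2 * σ ^ 2 / κ * a ^ 2 - (2 * σ * (a * x) - κ / 2 * x ^ 2) =
      (2 * σ * a - κ * x) ^ 2 / (2 * κ) := by
    field_simp
    ring
  have hnonneg : 0 ≤ (2 * σ * a - κ * x) ^ 2 / (2 * κ) := by positivity
  linarith

lemma IsSparseLowerBound.two_mul_ip_sub_half_sqnorm_le {Φ : Matrix (Fin m) (Fin p) ℝ} {r : ℕ}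
    {κ : ℝ} (hΦ : IsSparseLowerBound Φ r κ) (hκ : 0 < κ) {T : Finset (Fin p)} (hT : #T ≤ r)
    {d : Fin m → ℝ} (hd : d ∈ Submodule.span ℝ (colv Φ '' (T : Set (Fin p)))) (σ : ℝ)
    (ξ : Fin m → ℝ) :
    2 * σ * ip ξ d - 1 / 2 * sqnorm d ≤ 2 * σ ^ 2 / κ * ∑ j ∈ T, ip (colv Φ j) ξ ^ 2 := by
  obtain ⟨x, hx, rfl⟩ := exists_support_subset_mulVec_eq hd
  have hx0 : ∀ j ∉ T, x j = 0 := fun j hj => Function.notMem_support.1 fun h => hj (hx h)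
  calc 2 * σ * ip ξ (Φ.mulVec x) - 1 / 2 * sqnorm (Φ.mulVec x)
      ≤ 2 * σ * ip ξ (Φ.mulVec x) - κ / 2 * sqnorm x := by linarith [hΦ.mul_sqnorm_le hT hx]
    _ = ∑ j, (2 * σ * (ip (colv Φ j) ξ * x j) - κ / 2 * x j ^ 2) := by
        rw [ip_mulVec, sqnorm, mul_sum, mul_sum, sum_sub_distrib]
    _ = ∑ j ∈ T, (2 * σ * (ip (colv Φ j) ξ * x j) - κ / 2 * x j ^ 2) :=
        (sum_subset T.subset_univ fun j _ hj => by simp [hx0 j hj]).symm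
    _ ≤ 2 * σ ^ 2 / κ * ∑ j ∈ T, ip (colv Φ j) ξ ^ 2 := by
        rw [mul_sum]
        exact sum_le_sum fun j _ => two_mul_mul_sub_half_mul_sq_le hκ σ _ _

lemma IsSparseLowerBound.two_mul_ip_sub_sub_half_sqnorm_sub_le {Φ : Matrix (Fin m) (Fin p) ℝ}
    {r : ℕ} {κ : ℝ} (hΦ : IsSparseLowerBound Φ r κ) (hκ : 0 < κ) {M N : Finset (Fin p)}
    (hMN : #M + #N ≤ r) {g h : Fin m → ℝ}
    (hg : g ∈ Submodule.span ℝ (colv Φ '' (M : Set (Fin p))))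
    (hh : h ∈ Submodule.span ℝ (colv Φ '' (N : Set (Fin p)))) (σ : ℝ) (ξ : Fin m → ℝ) :
    2 * σ * ip ξ (g - h) - 1 / 2 * sqnorm (g - h) ≤
      2 * σ ^ 2 / κ * (∑ j ∈ M, ip (colv Φ j) ξ ^ 2 + ∑ j ∈ N, ip (colv Φ j) ξ ^ 2) := by
  have hd : g - h ∈ Submodule.span ℝ (colv Φ '' ((M ∪ N : Finset (Fin p)) : Set (Fin p))) := by
    rw [coe_union, Set.image_union, Submodule.span_union]
    exact sub_mem (Submodule.mem_sup_left hg) (Submodule.mem_sup_right hh)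
  have hunion : ∑ j ∈ M ∪ N, ip (colv Φ j) ξ ^ 2 ≤
      ∑ j ∈ M, ip (colv Φ j) ξ ^ 2 + ∑ j ∈ N, ip (colv Φ j) ξ ^ 2 := by
    rw [← sum_union_inter]
    exact le_add_of_nonneg_right (sum_nonneg fun _ _ => sq_nonneg _)
  refine (hΦ.two_mul_ip_sub_half_sqnorm_le hκ ((card_union_le M N).trans hMN) hd σ ξ).trans ?_
  gcongr

lemma mulVec_mem_span_of_isProjOnto {Φ : Matrix (Fin m) (Fin p) ℝ} {M : Finset (Fin p)}
    {H : Matrix (Fin m) (Fin m) ℝ} (hH : IsProjOnto Φ M H) (z : Fin m → ℝ) :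
    H.mulVec z ∈ Submodule.span ℝ (colv Φ '' (M : Set (Fin p))) :=
  hH.2.2 ▸ LinearMap.mem_range_self H.mulVecLin z

end Dictionary

section Aggregation

variable {m p : ℕ}

/-- The penalty `U_M`, for Gaussian marginals `⟨φ_j, ξ⟩` of variance `v j`. The theorem takes
`s = 2(δ+1) ln p`, and then `∑ j ∈ M, v j = ‖Ψ_M‖_F²`. -/
def penalty (σ κ s : ℝ) (v : Fin p → ℝ≥0) (M : Finset (Fin p)) : ℝ :=
  2 * σ ^ 2 / κ * (s * ∑ j ∈ M, (v j : ℝ))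

/-- The quantity `Δ₀`, for arbitrary estimators `g M`, weights `θ` and penalty `U`; the term
`‖Ψ_{M₀}ᵀ ε‖²` is written as `∑ j ∈ M₀, ⟨φ_j, ξ⟩²`. -/
def aggregationGap (Φ : Matrix (Fin m) (Fin p) ℝ) (σ κ : ℝ) (U : Finset (Fin p) → ℝ)
    (C : Finset (Finset (Fin p))) (M₀ : Finset (Fin p)) (g : Finset (Fin p) → Fin m → ℝ)
    (θ : Finset (Fin p) → ℝ) (ξ : Fin m → ℝ) : ℝ :=
  2 * σ * ip ξ (∑ M ∈ C, θ M • g M - g M₀) + σ ^ 2 / κ * ∑ j ∈ M₀, ip (colv Φ j) ξ ^ 2 -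
    3 / 2 * U M₀ - ∑ M ∈ C, θ M * U M - 1 / 2 * ∑ M ∈ C, θ M * sqnorm (g M - g M₀)

lemma ip_sum_smul_sub {ι : Type*} {C : Finset ι} {θ : ι → ℝ} (hθ : ∑ i ∈ C, θ i = 1)
    (ξ : Fin m → ℝ) (g : ι → Fin m → ℝ) (h : Fin m → ℝ) :
    ip ξ (∑ i ∈ C, θ i • g i - h) = ∑ i ∈ C, θ i * ip ξ (g i - h) := by
  have hsub : ∑ i ∈ C, θ i • g i - h = ∑ i ∈ C, θ i • (g i - h) := by
    simp only [smul_sub, sum_sub_distrib, ← sum_smul, hθ, one_smul]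
  rw [hsub]
  change ξ ⬝ᵥ _ = ∑ i ∈ C, θ i * (ξ ⬝ᵥ (g i - h))
  simp only [dotProduct_sum, dotProduct_smul, smul_eq_mul]

lemma aggregationGap_eq_sum (Φ : Matrix (Fin m) (Fin p) ℝ) (σ κ : ℝ) (U : Finset (Fin p) → ℝ)
    {C : Finset (Finset (Fin p))} (M₀ : Finset (Fin p)) (g : Finset (Fin p) → Fin m → ℝ)
    {θ : Finset (Fin p) → ℝ} (hθ : ∑ M ∈ C, θ M = 1) (ξ : Fin m → ℝ) :
    aggregationGap Φ σ κ U C M₀ g θ ξ =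
      ∑ M ∈ C, θ M * (2 * σ * ip ξ (g M - g M₀) - 1 / 2 * sqnorm (g M - g M₀) - U M) +
        σ ^ 2 / κ * ∑ j ∈ M₀, ip (colv Φ j) ξ ^ 2 - 3 / 2 * U M₀ := by
  simp only [aggregationGap, ip_sum_smul_sub hθ, mul_sub, sum_sub_distrib, mul_left_comm (θ _),
    ← mul_sum]
  ring

lemma sum_le_sum_max_zero_of_subset {ι : Type*} {M T : Finset ι} (hMT : M ⊆ T) (x : ι → ℝ) :
    ∑ j ∈ M, x j ≤ ∑ j ∈ T, max (x j) 0 :=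
  (sum_le_sum fun j _ => le_max_left (x j) 0).trans
    (sum_le_sum_of_subset_of_nonneg hMT fun _ _ _ => le_max_right _ _)

lemma aggregationGap_penalty_le {Φ : Matrix (Fin m) (Fin p) ℝ} {r : ℕ} {κ : ℝ}
    (hΦ : IsSparseLowerBound Φ r κ) (hκ : 0 < κ) {C : Finset (Finset (Fin p))}
    (hC : ∀ M ∈ C, 2 * #M ≤ r) {M₀ : Finset (Fin p)} (hM₀ : M₀ ∈ C)
    {g : Finset (Fin p) → Fin m → ℝ}
    (hg : ∀ M ∈ C, g M ∈ Submodule.span ℝ (colv Φ '' (M : Set (Fin p))))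
    {θ : Finset (Fin p) → ℝ} (hθ0 : ∀ M ∈ C, 0 ≤ θ M) (hθ1 : ∑ M ∈ C, θ M = 1)
    (σ s : ℝ) (v : Fin p → ℝ≥0) (ξ : Fin m → ℝ) :
    aggregationGap Φ σ κ (penalty σ κ s v) C M₀ g θ ξ ≤
      3 * σ ^ 2 / κ * ∑ j ∈ M₀, ip (colv Φ j) ξ ^ 2 - 3 / 2 * penalty σ κ s v M₀ +
        2 * σ ^ 2 / κ * ∑ j ∈ C.sup id, max (ip (colv Φ j) ξ ^ 2 - s * v j) 0 := by
  set B : ℝ := 2 * σ ^ 2 / κ * (∑ j ∈ M₀, ip (colv Φ j) ξ ^ 2 +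
    ∑ j ∈ C.sup id, max (ip (colv Φ j) ξ ^ 2 - s * v j) 0) with hB
  have hmodel : ∀ M ∈ C,
      2 * σ * ip ξ (g M - g M₀) - 1 / 2 * sqnorm (g M - g M₀) - penalty σ κ s v M ≤ B := by
    intro M hM
    have hcard : #M + #M₀ ≤ r := by linarith [hC M hM, hC M₀ hM₀]
    have hcross := hΦ.two_mul_ip_sub_sub_half_sqnorm_sub_le hκ hcard (hg M hM) (hg M₀ hM₀) σ ξ
    have hexcess : ∑ j ∈ M, (ip (colv Φ j) ξ ^ 2 - s * v j) ≤
        ∑ j ∈ C.sup id, max (ip (colv Φ j) ξ ^ 2 - s * v j) 0 :=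
      sum_le_sum_max_zero_of_subset (le_sup (f := id) hM) _
    rw [sum_sub_distrib, ← mul_sum] at hexcess
    have hscaled := mul_le_mul_of_nonneg_left hexcess (by positivity : 0 ≤ 2 * σ ^ 2 / κ)
    rw [penalty]
    linarith
  have havg : ∑ M ∈ C, θ M *
      (2 * σ * ip ξ (g M - g M₀) - 1 / 2 * sqnorm (g M - g M₀) - penalty σ κ s v M) ≤ B :=
    calc _ ≤ ∑ M ∈ C, θ M * B :=
          sum_le_sum fun M hM => mul_le_mul_of_nonneg_left (hmodel M hM) (hθ0 M hM)
      _ = B := by rw [← sum_mul, hθ1, one_mul]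
  rw [aggregationGap_eq_sum Φ σ κ _ M₀ g hθ1]
  linear_combination havg + hB

end Aggregation

section Expectation

variable {n m p : ℕ} {Ω : Type*} [MeasurableSpace Ω] {μ : Measure Ω}

lemma memLp_mulVec {k : ℕ} (B : Matrix (Fin k) (Fin n) ℝ) {q : ℝ≥0∞} {X : Ω → Fin n → ℝ}
    (hX : MemLp X q μ) : MemLp (fun ω => B.mulVec (X ω)) q μ :=
  B.mulVecLin.toContinuousLinearMap.comp_memLp' hX

lemma integrable_ip {X Y : Ω → Fin m → ℝ} (hX : MemLp X 2 μ) (hY : MemLp Y 2 μ) :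
    Integrable (fun ω => ip (X ω) (Y ω)) μ :=
  integrable_finsetSum _ fun i _ => (hX.eval i).integrable_mul (hY.eval i)

lemma integrable_sqnorm {X : Ω → Fin m → ℝ} (hX : MemLp X 2 μ) :
    Integrable (fun ω => sqnorm (X ω)) μ :=
  integrable_finsetSum _ fun i _ => (hX.eval i).integrable_sq

lemma integrable_sum_mul_of_sum_eq_one {ι : Type*} {C : Finset ι} {θ : Ω → ι → ℝ}
    (hθm : ∀ i ∈ C, AEStronglyMeasurable (fun ω => θ ω i) μ) (hθ0 : ∀ ω, ∀ i ∈ C, 0 ≤ θ ω i)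
    (hθ1 : ∀ ω, ∑ i ∈ C, θ ω i = 1) {X : ι → Ω → ℝ} (hX : ∀ i ∈ C, Integrable (X i) μ) :
    Integrable (fun ω => ∑ i ∈ C, θ ω i * X i ω) μ := by
  refine integrable_finsetSum _ fun i hi =>
    (hX i hi).bdd_mul (c := 1) (hθm i hi) (.of_forall fun ω => ?_)
  rw [Real.norm_of_nonneg (hθ0 ω i hi), ← hθ1 ω]
  exact single_le_sum (fun k hk => hθ0 ω k hk) hi

lemma integrable_aggregationGap [IsFiniteMeasure μ] (Φ : Matrix (Fin m) (Fin p) ℝ) (σ κ : ℝ)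
    (U : Finset (Fin p) → ℝ) {C : Finset (Finset (Fin p))} {M₀ : Finset (Fin p)} (hM₀ : M₀ ∈ C)
    {g : Finset (Fin p) → Ω → Fin m → ℝ} (hg : ∀ M ∈ C, MemLp (g M) 2 μ)
    {θ : Ω → Finset (Fin p) → ℝ} (hθm : ∀ M ∈ C, AEStronglyMeasurable (fun ω => θ ω M) μ)
    (hθ0 : ∀ ω, ∀ M ∈ C, 0 ≤ θ ω M) (hθ1 : ∀ ω, ∑ M ∈ C, θ ω M = 1)
    {ξ : Ω → Fin m → ℝ} (hξ : MemLp ξ 2 μ) :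
    Integrable (fun ω => aggregationGap Φ σ κ U C M₀ (fun M => g M ω) (θ ω) (ξ ω)) μ := by
  have hdiff : ∀ M ∈ C, MemLp (fun ω => g M ω - g M₀ ω) 2 μ := fun M hM =>
    (hg M hM).sub (hg M₀ hM₀)
  have hweighted : Integrable (fun ω => ∑ M ∈ C, θ ω M * (2 * σ * ip (ξ ω) (g M ω - g M₀ ω) -
      1 / 2 * sqnorm (g M ω - g M₀ ω) - U M)) μ :=
    integrable_sum_mul_of_sum_eq_one hθm hθ0 hθ1 fun M hM =>
      (((integrable_ip hξ (hdiff M hM)).const_mul _).sub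
        ((integrable_sqnorm (hdiff M hM)).const_mul _)).sub (integrable_const _)
  have hsquares : Integrable (fun ω => ∑ j ∈ M₀, ip (colv Φ j) (ξ ω) ^ 2) μ :=
    integrable_finsetSum _ fun j _ => (memLp_mulVec Φᵀ hξ).eval j |>.integrable_sq
  simp only [aggregationGap_eq_sum Φ σ κ U M₀ _ (hθ1 _)]
  exact (hweighted.add (hsquares.const_mul _)).sub (integrable_const _)

lemma integral_sq_of_hasLaw_gaussianReal {X : Ω → ℝ} {v : ℝ≥0}
    (hX : HasLaw X (gaussianReal 0 v) μ) : ∫ ω, X ω ^ 2 ∂μ = v :=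
  (hX.integral_comp (f := fun x => x ^ 2) (by fun_prop)).trans (integral_sq_gaussianReal v)

lemma integrable_sq_of_hasLaw_gaussianReal {X : Ω → ℝ} {v : ℝ≥0}
    (hX : HasLaw X (gaussianReal 0 v) μ) : Integrable (fun ω => X ω ^ 2) μ :=
  (hX.map_eq ▸ integrable_sq_gaussianReal v).comp_aemeasurable hX.aemeasurable

lemma integral_max_sq_sub_le_of_hasLaw_gaussianReal {X : Ω → ℝ} {v : ℝ≥0}
    (hX : HasLaw X (gaussianReal 0 v) μ) {s : ℝ} (hs : 0 ≤ s) :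
    ∫ ω, max (X ω ^ 2 - s * v) 0 ∂μ ≤ v * (2 * Real.exp (-s / 2)) :=
  (hX.integral_comp (f := fun x => max (x ^ 2 - s * v) 0) (by fun_prop)).trans_le
    (integral_max_sq_sub_gaussianReal_le v hs)

lemma integral_aggregationGap_penalty_le [IsProbabilityMeasure μ] {Φ : Matrix (Fin m) (Fin p) ℝ}
    {r : ℕ} {κ : ℝ} (hΦ : IsSparseLowerBound Φ r κ) (hκ : 0 < κ) {C : Finset (Finset (Fin p))}
    (hC : ∀ M ∈ C, 2 * #M ≤ r) {M₀ : Finset (Fin p)} (hM₀ : M₀ ∈ C)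
    {g : Finset (Fin p) → Ω → Fin m → ℝ} (hg : ∀ M ∈ C, MemLp (g M) 2 μ)
    (hgspan : ∀ M ∈ C, ∀ ω, g M ω ∈ Submodule.span ℝ (colv Φ '' (M : Set (Fin p))))
    {θ : Ω → Finset (Fin p) → ℝ} (hθm : ∀ M ∈ C, AEStronglyMeasurable (fun ω => θ ω M) μ)
    (hθ0 : ∀ ω, ∀ M ∈ C, 0 ≤ θ ω M) (hθ1 : ∀ ω, ∑ M ∈ C, θ ω M = 1)
    {ξ : Ω → Fin m → ℝ} (hξ : MemLp ξ 2 μ) {v : Fin p → ℝ≥0}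
    (hv : ∀ j, HasLaw (fun ω => ip (colv Φ j) (ξ ω)) (gaussianReal 0 (v j)) μ)
    (σ : ℝ) {s : ℝ} (hs : 0 ≤ s) :
    ∫ ω, aggregationGap Φ σ κ (penalty σ κ s v) C M₀ (fun M => g M ω) (θ ω) (ξ ω) ∂μ ≤
      3 * σ ^ 2 / κ * ∑ j ∈ M₀, (v j : ℝ) - 3 / 2 * penalty σ κ s v M₀ +
        2 * σ ^ 2 / κ * ∑ j ∈ C.sup id, v j * (2 * Real.exp (-s / 2)) := by
  have hsq : ∀ j, Integrable (fun ω => ip (colv Φ j) (ξ ω) ^ 2) μ := fun j =>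
    integrable_sq_of_hasLaw_gaussianReal (hv j)
  have hmax : ∀ j, Integrable (fun ω => max (ip (colv Φ j) (ξ ω) ^ 2 - s * v j) 0) μ := fun j =>
    ((hsq j).sub (integrable_const _)).pos_part
  have hfst : Integrable (fun ω => 3 * σ ^ 2 / κ * ∑ j ∈ M₀, ip (colv Φ j) (ξ ω) ^ 2 -
      3 / 2 * penalty σ κ s v M₀) μ :=
    ((integrable_finsetSum _ fun j _ => hsq j).const_mul _).sub (integrable_const _)
  have hsnd : Integrable (fun ω => 2 * σ ^ 2 / κ *
      ∑ j ∈ C.sup id, max (ip (colv Φ j) (ξ ω) ^ 2 - s * v j) 0) μ :=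
    (integrable_finsetSum _ fun j _ => hmax j).const_mul _
  calc _ ≤ ∫ ω, (3 * σ ^ 2 / κ * ∑ j ∈ M₀, ip (colv Φ j) (ξ ω) ^ 2 -
          3 / 2 * penalty σ κ s v M₀ + 2 * σ ^ 2 / κ *
            ∑ j ∈ C.sup id, max (ip (colv Φ j) (ξ ω) ^ 2 - s * v j) 0) ∂μ :=
        integral_mono (integrable_aggregationGap Φ σ κ _ hM₀ hg hθm hθ0 hθ1 hξ) (hfst.add hsnd)
          fun ω => aggregationGap_penalty_le hΦ hκ hC hM₀ (fun M hM => hgspan M hM ω) (hθ0 ω)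
            (hθ1 ω) σ s v (ξ ω)
    _ = 3 * σ ^ 2 / κ * ∑ j ∈ M₀, (v j : ℝ) - 3 / 2 * penalty σ κ s v M₀ + 2 * σ ^ 2 / κ *
          ∑ j ∈ C.sup id, ∫ ω, max (ip (colv Φ j) (ξ ω) ^ 2 - s * v j) 0 ∂μ := by
        rw [integral_add hfst hsnd, integral_sub
          ((integrable_finsetSum _ fun j _ => hsq j).const_mul _) (integrable_const _),
          integral_const_mul, integral_const_mul, integral_const_mul,
          integral_finsetSum _ fun j _ => hsq j, integral_finsetSum _ fun j _ => hmax j,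
          integral_const, probReal_univ, one_smul]
        simp only [integral_sq_of_hasLaw_gaussianReal (hv _)]
    _ ≤ _ := by
        gcongr with j
        exact integral_max_sq_sub_le_of_hasLaw_gaussianReal (hv j) hs

end Expectation

lemma natCast_mul_exp_neg_mul_log {p : ℕ} (hp : 0 < p) (δ : ℝ) :
    p * Real.exp (-(2 * (δ + 1) * Real.log p) / 2) = (p : ℝ) ^ (-δ) := by
  have hp' : (0 : ℝ) < p := by exact_mod_cast hp
  have hsplit : Real.log p * -δ = Real.log p + -(2 * (δ + 1) * Real.log p) / 2 := by ring
  rw [Real.rpow_def_of_pos hp', hsplit, Real.exp_add, Real.exp_log hp']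

theorem lemma4_expectation_general {m p r : ℕ} (hp : 2 ≤ p) {Φ : Matrix (Fin m) (Fin p) ℝ}
    {κ : ℝ} (hκ : 0 < κ) (hΦ : IsSparseLowerBound Φ r κ)
    {Ω : Type*} [MeasurableSpace Ω] {μ : Measure Ω} [IsProbabilityMeasure μ]
    {ξ : Ω → Fin m → ℝ} (hξ : MemLp ξ 2 μ) {v : Fin p → ℝ≥0}
    (hv : ∀ j, HasLaw (fun ω => ip (colv Φ j) (ξ ω)) (gaussianReal 0 (v j)) μ)
    {C : Finset (Finset (Fin p))} (hC : ∀ M ∈ C, 2 * #M ≤ r)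
    {K : ℝ} (hK0 : 0 ≤ K) (hK : ∀ M ∈ C, ∀ j ∈ M, v j ≤ K) {M₀ : Finset (Fin p)} (hM₀ : M₀ ∈ C)
    {g : Finset (Fin p) → Ω → Fin m → ℝ} (hg : ∀ M ∈ C, MemLp (g M) 2 μ)
    (hgspan : ∀ M ∈ C, ∀ ω, g M ω ∈ Submodule.span ℝ (colv Φ '' (M : Set (Fin p))))
    {θ : Ω → Finset (Fin p) → ℝ} (hθm : ∀ M ∈ C, AEStronglyMeasurable (fun ω => θ ω M) μ)
    (hθ0 : ∀ ω, ∀ M ∈ C, 0 ≤ θ ω M) (hθ1 : ∀ ω, ∑ M ∈ C, θ ω M = 1)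
    (σ : ℝ) {δ : ℝ} (hδ : -1 < δ) :
    ∫ ω, aggregationGap Φ σ κ (penalty σ κ (2 * (δ + 1) * Real.log p) v) C M₀
        (fun M => g M ω) (θ ω) (ξ ω) ∂μ ≤
      penalty σ κ (2 * (δ + 1) * Real.log p) v M₀ * (3 / (4 * (δ + 1) * Real.log p) - 3 / 2) +
        4 * σ ^ 2 * K / κ * (p : ℝ) ^ (-δ) := by
  have hlog : 0 < Real.log p := Real.log_pos (by exact_mod_cast hp)
  have hδ' : 0 < δ + 1 := by linarith
  have hvar : ∑ j ∈ C.sup id, (v j : ℝ) ≤ p * K :=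
    calc ∑ j ∈ C.sup id, (v j : ℝ) ≤ #(C.sup id) • K := sum_le_card_nsmul _ _ _ fun j hj => by
          obtain ⟨M, hM, hjM⟩ := mem_sup.1 hj
          exact hK M hM j hjM
      _ ≤ p * K := by
          rw [nsmul_eq_mul]
          gcongr
          exact card_finset_fin_le _
  have hexp : 2 * σ ^ 2 / κ * (p * K *
      (2 * Real.exp (-(2 * (δ + 1) * Real.log p) / 2))) = 4 * σ ^ 2 * K / κ * (p : ℝ) ^ (-δ) := by
    rw [← natCast_mul_exp_neg_mul_log (by omega) δ]
    ring
  have hpen : 3 * σ ^ 2 / κ * ∑ j ∈ M₀, (v j : ℝ) =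
      penalty σ κ (2 * (δ + 1) * Real.log p) v M₀ * (3 / (4 * (δ + 1) * Real.log p)) := by
    rw [penalty]
    field_simp
    ring
  refine (integral_aggregationGap_penalty_le hΦ hκ hC hM₀ hg hgspan hθm hθ0 hθ1 hξ hv σ
    (by positivity)).trans ?_
  rw [← sum_mul, hpen, mul_sub, mul_comm (3 / 2 : ℝ), ← hexp]
  gcongr

section Observation

variable {n m p : ℕ} {Ω : Type*} [MeasurableSpace Ω] {μ : Measure Ω} {ε : Ω → Fin n → ℝ}

lemma hasLaw_ip (hε : HasLaw ε (Measure.pi fun _ => gaussianReal 0 1) μ) (w : Fin n → ℝ) :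
    HasLaw (fun ω => ip w (ε ω)) (gaussianReal 0 (sqnorm w).toNNReal) μ := by
  have hmeas : Measurable (ip w) := by
    unfold ip
    fun_prop
  refine HasLaw.fun_comp (Y := ip w) ⟨hmeas.aemeasurable, ?_⟩ hε
  set L : StrongDual ℝ (EuclideanSpace ℝ (Fin n)) := innerSL ℝ (WithLp.toLp 2 w)
  have hL : ip w = L ∘ WithLp.toLp 2 := by
    ext e
    simp [L, ip, PiLp.inner_apply, mul_comm]
  have hnorm : ‖L‖ ^ 2 = sqnorm w := by
    simp [L, innerSL_apply_norm, EuclideanSpace.norm_sq_eq, sqnorm]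
  rw [hL, ← Measure.map_map (by fun_prop) (by fun_prop), map_pi_eq_stdGaussian,
    IsGaussian.map_eq_gaussianReal, integral_strongDual_stdGaussian, variance_dual_stdGaussian,
    hnorm]

lemma memLp_of_hasLaw_pi_gaussianReal
    (hε : HasLaw ε (Measure.pi fun _ => gaussianReal 0 1) μ) {q : ℝ≥0∞} (hq : q ≠ ⊤) :
    MemLp ε q μ := by
  refine MemLp.of_eval fun i => ?_
  have hlaw : HasLaw (fun ω => ε ω i) (gaussianReal 0 1) μ :=
    (measurePreserving_eval _ i).fun_comp_hasLaw hε
  exact (hlaw.map_eq ▸ memLp_id_gaussianReal' q hq).comp_of_map hlaw.aemeasurable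

lemma memLp_zv [IsFiniteMeasure μ] {q : ℝ≥0∞} (hε : MemLp ε q μ)
    (A : Matrix (Fin n) (Fin m) ℝ) (f : Fin m → ℝ) (σ : ℝ) :
    MemLp (fun ω => zv A f σ (ε ω)) q μ :=
  memLp_mulVec _ ((memLp_const (A.mulVec f)).add (hε.const_smul σ))

lemma memLp_xiv {q : ℝ≥0∞} (hε : MemLp ε q μ) (A : Matrix (Fin n) (Fin m) ℝ) :
    MemLp (fun ω => xiv A (ε ω)) q μ :=
  memLp_mulVec _ hε

lemma hasLaw_ip_colv_xiv (hε : HasLaw ε (Measure.pi fun _ => gaussianReal 0 1) μ)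
    (A : Matrix (Fin n) (Fin m) ℝ) (Φ : Matrix (Fin m) (Fin p) ℝ) (j : Fin p) :
    HasLaw (fun ω => ip (colv Φ j) (xiv A (ε ω)))
      (gaussianReal 0 (sqnorm (colv (Psi A Φ) j)).toNNReal) μ := by
  simpa only [ip_colv_xiv] using hasLaw_ip hε (colv (Psi A Φ) j)

lemma mem_modelsG {r : ℕ} {A : Matrix (Fin n) (Fin m) ℝ} {Φ : Matrix (Fin m) (Fin p) ℝ} {γ : ℝ}
    {M : Finset (Fin p)} :
    M ∈ modelsG r A Φ γ ↔ 2 * #M ≤ r ∧ ∑ j ∈ M, sqnorm (colv (Psi A Φ) j) ≤ γ ^ 2 * n := by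
  simp [modelsG, frob2_restr]

lemma toNNReal_sqnorm_colv_Psi_le {r : ℕ} {A : Matrix (Fin n) (Fin m) ℝ}
    {Φ : Matrix (Fin m) (Fin p) ℝ} {γ : ℝ} {M : Finset (Fin p)} (hM : M ∈ modelsG r A Φ γ)
    {j : Fin p} (hj : j ∈ M) :
    (sqnorm (colv (Psi A Φ) j)).toNNReal ≤ γ ^ 2 * n := by
  rw [Real.coe_toNNReal _ (sqnorm_nonneg _)]
  exact (single_le_sum (f := fun k => sqnorm (colv (Psi A Φ) k))
    (fun _ _ => sqnorm_nonneg _) hj).trans (mem_modelsG.1 hM).2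

lemma Ufun_eq_penalty (A : Matrix (Fin n) (Fin m) ℝ) (Φ : Matrix (Fin m) (Fin p) ℝ)
    (σ δ ν2 : ℝ) : Ufun A Φ σ δ ν2 = penalty σ ν2 (2 * (δ + 1) * Real.log p)
      fun j => (sqnorm (colv (Psi A Φ) j)).toNNReal := by
  ext M
  simp only [Ufun, penalty, frob2_restr, Real.coe_toNNReal _ (sqnorm_nonneg _)]
  ring

end Observation

/-- Lemma 4, second part: the bound in expectation for `Δ₀` over the restricted
collection `𝓜_γ`. -/
theorem lemma4_expectation
    {n m p r : ℕ} (hp : 2 ≤ p) (hmn : m ≤ n)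
    (A : Matrix (Fin n) (Fin m) ℝ) (hrank : A.rank = m)
    (Φ : Matrix (Fin m) (Fin p) ℝ) (hΦnorm : ∀ j, sqnorm (colv Φ j) = 1)
    (σ : ℝ) (hσ : 0 < σ) (δ : ℝ) (hδ : 0 < δ) (γ : ℝ) (hγ : 0 < γ)
    (ν2 : ℝ) (hν2 : 0 < ν2)
    (hν2min : ∀ x : Fin p → ℝ, x ≠ 0 → sparse r x → ν2 * sqnorm x ≤ sqnorm (Φ.mulVec x))
    (H : Finset (Fin p) → Matrix (Fin m) (Fin m) ℝ)
    (hH : ∀ M : Finset (Fin p), IsProjOnto Φ M (H M))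
    {Ω : Type*} [MeasurableSpace Ω] (μ : Measure Ω) [IsProbabilityMeasure μ]
    (ε : Ω → Fin n → ℝ) (hεmeas : Measurable ε)
    (hεdist : Measure.map ε μ = Measure.pi fun _ : Fin n => gaussianReal 0 1)
    (f : Fin m → ℝ)
    (M₀ : Finset (Fin p)) (hM₀ : M₀ ∈ modelsG r A Φ γ)
    (θhat : Ω → Finset (Fin p) → ℝ)
    (hθmeas : ∀ M : Finset (Fin p), Measurable fun ω => θhat ω M)
    (hθnn : ∀ ω, ∀ M ∈ modelsG r A Φ γ, 0 ≤ θhat ω M)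
    (hθsum : ∀ ω, ∑ M ∈ modelsG r A Φ γ, θhat ω M = 1) :
    ∫ ω,
        (2 * σ * ip (xiv A (ε ω))
            (aggEst (modelsG r A Φ γ) H (zv A f σ (ε ω)) (θhat ω) -
              (H M₀).mulVec (zv A f σ (ε ω))) +
          σ ^ 2 / ν2 * sqnorm ((restr (Psi A Φ) M₀)ᵀ.mulVec (ε ω)) -
          3 / 2 * Ufun A Φ σ δ ν2 M₀ -
          (∑ M ∈ modelsG r A Φ γ, θhat ω M * Ufun A Φ σ δ ν2 M) -
          1 / 2 * ∑ M ∈ modelsG r A Φ γ,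
            θhat ω M *
              sqnorm ((H M).mulVec (zv A f σ (ε ω)) - (H M₀).mulVec (zv A f σ (ε ω)))) ∂μ ≤
      Ufun A Φ σ δ ν2 M₀ * (3 / (4 * (δ + 1) * Real.log p) - 3 / 2) +
        4 * σ ^ 2 * γ ^ 2 / ν2 * (n : ℝ) * (p : ℝ) ^ (-δ) := by
  have hε : HasLaw ε (Measure.pi fun _ => gaussianReal 0 1) μ := ⟨hεmeas.aemeasurable, hεdist⟩
  have hε2 : MemLp ε 2 μ := memLp_of_hasLaw_pi_gaussianReal hε ENNReal.ofNat_ne_top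
  have hbound : 4 * σ ^ 2 * γ ^ 2 / ν2 * (n : ℝ) * (p : ℝ) ^ (-δ) =
      4 * σ ^ 2 * (γ ^ 2 * n) / ν2 * (p : ℝ) ^ (-δ) := by ring
  simp only [sqnorm_restr_transpose_mulVec, ← ip_colv_xiv, Ufun_eq_penalty, hbound]
  exact lemma4_expectation_general hp hν2 hν2min (memLp_xiv hε2 A) (hasLaw_ip_colv_xiv hε A Φ)
    (fun M hM => (mem_modelsG.1 hM).1) (by positivity)
    (fun M hM j hj => toNNReal_sqnorm_colv_Psi_le hM hj) hM₀
    (fun M _ => memLp_mulVec (H M) (memLp_zv hε2 A f σ))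
    (fun M _ ω => mulVec_mem_span_of_isProjOnto (hH M) _)
    (fun M _ => (hθmeas M).aestronglyMeasurable) hθnn hθsum σ (by linarith)
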